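/- arXiv:1607.08455 — 2 statements merged into one kernel-verified Lean document; each statement's English description precedes it below -/
import Mathlib

section
/- Let k be an odd positive integer, i a positive integer with gcd(i,k) = 1, t a natural number with 0 ≤ t ≤ k−1, e = (2^i + 1)·2^t, F = GaloisField 2 k, and α ∈ F with α ≠ 0 and α ≠ 1. Define V : F × F → F × F by V(x,y) = ((αx + y)^e + x^e, (x + αy)^e + y^e). Then for every (u,v) ∈ F × F with (u,v) ≠ (0,0) and every (a,b) ∈ F × F, the number of pairs (x,y) ∈ F × F satisfying V(x+u, y+v) + V(x,y) = (a,b) is at most 4. -/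
/-- The closed butterfly with branch size `k`, exponent `e` and coefficient `α`. -/
noncomputable def closedButterfly (k e : ℕ) (α : GaloisField 2 k) :
    GaloisField 2 k × GaloisField 2 k → GaloisField 2 k × GaloisField 2 k :=
  fun p => ((α * p.1 + p.2) ^ e + p.1 ^ e, (p.1 + α * p.2) ^ e + p.2 ^ e)

/-- In characteristic two an endomorphism with trivial fixed field and no nontrivial elements
of norm one makes one of the two determinants nonzero. -/
theorem butterfly_det_ne {F : Type*} [Field F] [CharP F 2] (σ : F →+* F)
    (h1 : ∀ x, σ x = x → x = 0 ∨ x = 1) (h3 : ∀ x, σ x * x = 1 → x = 1)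
    (h4 : ∀ x : F, x ^ 2 + x ≠ 1) (α u v : F) (hα0 : α ≠ 0) (hα1 : α ≠ 1)
    (huv : ¬ (u = 0 ∧ v = 0))
    (hM : (σ α * (α * u + v) + u) * (σ α * (u + α * v) + v) + (α * u + v) * (u + α * v) = 0)
    (hN : (α * σ (α * u + v) + σ u) * (α * σ (u + α * v) + σ v)
      + σ (α * u + v) * σ (u + α * v) = 0) : False := by
  have h2 : (2 : F) = 0 := CharTwo.two_eq_zero
  simp only [map_add, map_mul] at hN
  have hw1 : σ (u * v / (u + v) ^ 2) = σ u * σ v / (σ u + σ v) ^ 2 := by simp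
  have hE : α + σ α + α * σ α ≠ 0 := by
    intro h
    have := h3 (α + 1) (by
      rw [map_add, map_one]
      linear_combination h)
    exact hα0 (by simpa using this)
  have hs : u + v ≠ 0 := by
    intro h
    have hv : v = u := by linear_combination h - u * h2
    subst hv
    have : (α + σ α + α * σ α) ^ 2 * v ^ 2 = 0 := by
      linear_combination (norm := (ring_nf; try reduce_mod_char!)) hM
    have : v = 0 := by simpa [hE] using this
    exact huv ⟨this, this⟩
  have hS : σ u + σ v ≠ 0 := by rw [← map_add]; exact (map_ne_zero σ).2 hs
  have hs0 : σ α ≠ 0 := by simpa using hα0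
  have e1 : α ^ 2 * (u * v / (u + v) ^ 2)
      = (α + σ α) * α * σ α / (α + σ α + α * σ α) ^ 2 + α := by
    generalize σ α = a at *
    field_simp
    linear_combination (norm := (ring_nf; try reduce_mod_char!)) α * hM
  have e2 : σ α ^ 2 * (σ u * σ v / (σ u + σ v) ^ 2)
      = (α + σ α) * α * σ α / (α + σ α + α * σ α) ^ 2 + σ α := by
    generalize σ α = a at *
    generalize σ u = U at *
    generalize σ v = V at *
    generalize hEE : α + a + α * a = E at hE ⊢
    field_simp
    rw [← hEE]
    linear_combination (norm := (ring_nf; try reduce_mod_char!)) a * hN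
  have e3 := congrArg σ e1
  rw [map_mul, map_pow, hw1, e2, map_add] at e3
  rcases h1 _ (add_right_cancel e3).symm with h | h
  · have hne : α + σ α = 0 := by simpa [hα0, hE, hs0] using h
    have : σ α = α := by linear_combination hne - α * h2
    rcases h1 _ this with h | h
    · exact hα0 h
    · exact hα1 h
  · apply h4 ((α + σ α) / (α + σ α + α * σ α))
    rw [div_eq_one_iff_eq (pow_ne_zero _ hE)] at h
    generalize σ α = a at *
    field_simp
    linear_combination (norm := (ring_nf; try reduce_mod_char!)) h

/-- The kernel of the associated alternating form has at most four elements. -/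
theorem butterfly_kernel {F : Type*} [Field F] [CharP F 2] (σ : F →+* F)
    (h1 : ∀ x, σ x = x → x = 0 ∨ x = 1) (h3 : ∀ x, σ x * x = 1 → x = 1)
    (h4 : ∀ x : F, x ^ 2 + x ≠ 1) (α u v : F) (hα0 : α ≠ 0) (hα1 : α ≠ 1)
    (huv : ¬ (u = 0 ∧ v = 0)) (K : F → F → Prop)
    (hK : ∀ x y, K x y ↔
      (σ (α * x + y) * (α * u + v) + (α * x + y) * σ (α * u + v) + σ x * u + x * σ u = 0 ∧
       σ (x + α * y) * (u + α * v) + (x + α * y) * σ (u + α * v) + σ y * v + y * σ v = 0)) :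
    ∃ x1 y1, ∀ x y, K x y → (x = 0 ∧ y = 0) ∨ (x = u ∧ y = v) ∨ (x = x1 ∧ y = y1) ∨
      (x = x1 + u ∧ y = y1 + v) := by
  have h2 : (2 : F) = 0 := CharTwo.two_eq_zero
  have hdet := butterfly_det_ne σ h1 h3 h4 α u v hα0 hα1 huv
  simp only [map_add, map_mul] at hK hdet
  obtain ⟨m, hm⟩ : ∃ m, m = (σ α * (α * u + v) + u) * (σ α * (u + α * v) + v)
    + (α * u + v) * (u + α * v) := ⟨_, rfl⟩
  obtain ⟨n, hn⟩ : ∃ n, n = (α * (σ α * σ u + σ v) + σ u) * (α * (σ u + σ α * σ v) + σ v)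
    + (σ α * σ u + σ v) * (σ u + σ α * σ v) := ⟨_, rfl⟩
  rw [← hm, ← hn] at hdet
  have hW : ∀ x y, K x y → m * σ (x * v + y * u) = n * (x * v + y * u) := by
    intro x y h
    obtain ⟨ha, hb⟩ := (hK x y).1 h
    simp only [map_add, map_mul]
    rw [hm, hn]
    generalize σ α = a at *
    generalize σ u = U at *
    generalize σ v = V at *
    generalize σ x = X at *
    generalize σ y = Y at *
    linear_combination (norm := (ring_nf; try reduce_mod_char!))
      ((U + a * V) * (u + α * v) + V * v) * ha + ((a * U + V) * (α * u + v) + U * u) * hb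
  have hadd : ∀ x y x' y', K x y → K x' y' → K (x + x') (y + y') := by
    intro x y x' y' h h'
    rw [hK] at *
    simp only [map_add]
    exact ⟨by linear_combination h.1 + h'.1, by linear_combination h.2 + h'.2⟩
  have hline : ∀ x y, K x y → x * v + y * u = 0 → (x = 0 ∧ y = 0) ∨ (x = u ∧ y = v) := by
    intro x y h h0
    obtain ⟨l, hx, hy⟩ : ∃ l, x = l * u ∧ y = l * v := by
      by_cases hu : u = 0
      · have hv : v ≠ 0 := fun h => huv ⟨hu, h⟩
        refine ⟨y / v, ?_, by field_simp⟩
        subst hu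
        simpa [hv] using h0
      · refine ⟨x / u, by field_simp, ?_⟩
        field_simp
        linear_combination h0 - x * v * h2
    subst hx hy
    have hl : σ l = l := by
      by_contra hne
      have hne' : σ l + l ≠ 0 := fun h => hne (by linear_combination h - l * h2)
      obtain ⟨ha, hb⟩ := (hK _ _).1 h
      simp only [map_mul] at ha hb
      have ha' : (σ l + l) * (σ (α * u + v) * (α * u + v) + σ u * u) = 0 := by
        simp only [map_add, map_mul]
        linear_combination ha
      have hb' : (σ l + l) * (σ (u + α * v) * (u + α * v) + σ v * v) = 0 := by
        simp only [map_add, map_mul]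
        linear_combination hb
      have hcube : ∀ p q : F, (σ l + l) * (σ p * p + σ q * q) = 0 → p = q := by
        intro p q hpq
        have hpq : σ p * p + σ q * q = 0 := by simpa [hne'] using hpq
        by_cases hq : q = 0
        · subst hq; simpa using hpq
        · have hq' : σ q ≠ 0 := by simpa using hq
          have := h3 (p / q) (by
            rw [map_div₀]
            field_simp
            linear_combination hpq - σ q * q * h2)
          rwa [div_eq_one_iff_eq hq] at this
      have c1 := hcube _ _ ha'
      have c2 := hcube _ _ hb'
      have hu : α ^ 2 * u = 0 := by
        linear_combination (norm := (ring_nf; try reduce_mod_char!)) (α + 1) * c1 + c2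
      have hv : α ^ 2 * v = 0 := by
        linear_combination (norm := (ring_nf; try reduce_mod_char!)) (α + 1) * c2 + c1
      exact huv ⟨by simpa [hα0] using hu, by simpa [hα0] using hv⟩
    rcases h1 l hl with h | h
    · left; simp [h]
    · right; simp [h]
  by_cases hex : ∃ x y, K x y ∧ x * v + y * u ≠ 0
  · obtain ⟨x1, y1, hK1, hne⟩ := hex
    refine ⟨x1, y1, fun x y h => ?_⟩
    by_cases h0 : x * v + y * u = 0
    · rcases hline x y h h0 with h | h
      · exact Or.inl h
      · exact Or.inr (Or.inl h)
    · have e1 := hW _ _ hK1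
      have e2 := hW _ _ h
      have hm0 : m ≠ 0 := by
        intro h
        rw [h] at e1
        have : n = 0 := by simpa [hne] using e1.symm
        exact hdet h this
      have heq : x * v + y * u = x1 * v + y1 * u := by
        generalize x * v + y * u = w at *
        generalize x1 * v + y1 * u = w1 at *
        have hw1 : σ w1 ≠ 0 := by simpa using hne
        have : σ (w / w1) = w / w1 := by
          rw [map_div₀]
          field_simp
          apply mul_left_cancel₀ hm0
          linear_combination w1 * e2 - w * e1
        rcases h1 _ this with h | h
        · simp [hne, h0] at h
        · rwa [div_eq_one_iff_eq hne] at h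
      have := hline _ _ (hadd _ _ _ _ h hK1) (by
        linear_combination heq + (x1 * v + y1 * u) * h2)
      rcases this with ⟨hx, hy⟩ | ⟨hx, hy⟩
      · right; right; left
        exact ⟨by linear_combination hx - x1 * h2, by linear_combination hy - y1 * h2⟩
      · right; right; right
        exact ⟨by linear_combination hx - x1 * h2, by linear_combination hy - y1 * h2⟩
  · push Not at hex
    refine ⟨0, 0, fun x y h => ?_⟩
    rcases hline x y h (hex x y h) with h | h
    · exact Or.inl h
    · exact Or.inr (Or.inl h)

/-- Theorem 3.2: the closed butterfly with `k` odd, `gcd(i,k) = 1`, exponent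
`e = (2^i+1)·2^t` and coefficient `α ≠ 0, 1` has differential uniformity at most 4. -/
theorem closedButterfly_differential_uniformity_le_four (k i t : ℕ) (hk : Odd k)
    (hkpos : 0 < k) (hipos : 0 < i) (hgcd : Nat.gcd i k = 1) (ht : t ≤ k - 1)
    (α : GaloisField 2 k) (hα0 : α ≠ 0) (hα1 : α ≠ 1)
    (u v a b : GaloisField 2 k) (huv : (u, v) ≠ (0, 0)) :
    Set.ncard {p : GaloisField 2 k × GaloisField 2 k |
      closedButterfly k ((2 ^ i + 1) * 2 ^ t) α (p.1 + u, p.2 + v)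
        + closedButterfly k ((2 ^ i + 1) * 2 ^ t) α p = (a, b)} ≤ 4 := by
  have h2 : (2 : GaloisField 2 k) = 0 := CharTwo.two_eq_zero
  classical
  have hchar : CharP (GaloisField 2 k) 2 := inferInstance
  have hper : ∀ j, Nat.gcd j k = 1 → ∀ x : GaloisField 2 k, x ^ 2 ^ j = x → x = 0 ∨ x = 1 := by
    intro j hj x hx
    have p1 : Function.IsPeriodicPt (frobenius (GaloisField 2 k) 2) j x := by
      rw [Function.IsPeriodicPt, Function.IsFixedPt, iterate_frobenius]; exact hx
    have p2 : Function.IsPeriodicPt (frobenius (GaloisField 2 k) 2) k x := by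
      rw [Function.IsPeriodicPt, Function.IsFixedPt, iterate_frobenius]
      have hc := GaloisField.card 2 k hkpos.ne'
      have : Fintype (GaloisField 2 k) := Fintype.ofFinite _
      rw [← hc, Nat.card_eq_fintype_card]
      exact FiniteField.pow_card x
    have p3 := p1.gcd p2
    rw [hj, Function.IsPeriodicPt, Function.IsFixedPt, iterate_frobenius] at p3
    have : x * (x - 1) = 0 := by linear_combination p3
    rcases mul_eq_zero.1 this with h | h
    · exact Or.inl h
    · exact Or.inr (sub_eq_zero.1 h)
  have hcop2 : Nat.gcd 2 k = 1 := (Nat.coprime_two_left).2 hk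
  let σ := iterateFrobenius (GaloisField 2 k) 2 i
  let τ := iterateFrobenius (GaloisField 2 k) 2 t
  have hσ : ∀ x, σ x = x ^ 2 ^ i := fun x => iterateFrobenius_def ..
  have hτ : ∀ x, τ x = x ^ 2 ^ t := fun x => iterateFrobenius_def ..
  have hpow : ∀ x : GaloisField 2 k, x ^ ((2 ^ i + 1) * 2 ^ t) = τ (σ x * x) := by
    intro x
    rw [hτ, hσ, pow_mul, pow_succ]
  have h1 : ∀ x, σ x = x → x = 0 ∨ x = 1 := fun x hx => hper i hgcd x (by rw [← hσ]; exact hx)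
  have h3 : ∀ x, σ x * x = 1 → x = 1 := by
    intro x hx
    have hx0 : x ≠ 0 := by rintro rfl; simp at hx
    have hs : σ (σ x) = x := by
      have e := congrArg σ hx
      rw [map_mul, map_one] at e
      have hsx : σ x ≠ 0 := by simpa using hx0
      apply mul_right_cancel₀ hsx
      rw [e, ← hx, mul_comm]
    rw [hσ, hσ, ← pow_mul, ← pow_add] at hs
    have hc : Nat.gcd (i + i) k = 1 := by
      rw [← two_mul]; exact Nat.Coprime.mul_left hcop2 hgcd
    exact (hper _ hc x hs).resolve_left hx0
  have h4 : ∀ x : GaloisField 2 k, x ^ 2 + x ≠ 1 := by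
    intro x hx
    have : x ^ 2 ^ 2 = x := by
      norm_num
      linear_combination (x ^ 2 + 1 - x) * hx + hx + (1 - 2 * x) * h2
    rcases hper 2 hcop2 x this with h | h
    · simp [h] at hx
    · subst h; norm_num at hx; rw [h2] at hx; exact zero_ne_one hx
  have huv' : ¬ (u = 0 ∧ v = 0) := fun h => huv (by simp [h.1, h.2])
  obtain ⟨x1, y1, hker⟩ := butterfly_kernel σ h1 h3 h4 α u v hα0 hα1 huv' _ (fun _ _ => Iff.rfl)
  set S := {p : GaloisField 2 k × GaloisField 2 k |
      closedButterfly k ((2 ^ i + 1) * 2 ^ t) α (p.1 + u, p.2 + v)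
        + closedButterfly k ((2 ^ i + 1) * 2 ^ t) α p = (a, b)} with hS
  rcases S.eq_empty_or_nonempty with he | ⟨p0, hp0⟩
  · simp [he]
  have hsub : S ⊆ (({p0, p0 + (u, v), p0 + (x1, y1), p0 + (x1 + u, y1 + v)} : Finset _) :
      Set (GaloisField 2 k × GaloisField 2 k)) := by
    intro p hp
    have hτi : Function.Injective τ := τ.injective
    rw [hS, Set.mem_ofPred_eq] at hp hp0
    simp only [closedButterfly, hpow, Prod.mk_add_mk, Prod.mk.injEq, ← map_add τ] at hp hp0
    have ea := hτi (hp.1.trans hp0.1.symm)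
    have eb := hτi (hp.2.trans hp0.2.symm)
    have := hker (p.1 + p0.1) (p.2 + p0.2) (by
      simp only [map_add, map_mul] at ea eb ⊢
      constructor
      · linear_combination (norm := (ring_nf; try reduce_mod_char!)) ea
      · linear_combination (norm := (ring_nf; try reduce_mod_char!)) eb)
    obtain ⟨x, y⟩ := p
    obtain ⟨x0, y0⟩ := p0
    simp only [Finset.coe_insert, Finset.coe_singleton, Set.mem_insert_iff,
      Set.mem_singleton_iff, Prod.mk_add_mk, Prod.mk.injEq]
    have hc : ∀ s t r : GaloisField 2 k, s + t = r → s = t + r := by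
      intro s t r h
      linear_combination h - t * h2
    rcases this with h | h | h | h
    · left; exact ⟨by simpa using hc _ _ _ h.1, by simpa using hc _ _ _ h.2⟩
    · right; left; exact ⟨hc _ _ _ h.1, hc _ _ _ h.2⟩
    · right; right; left; exact ⟨hc _ _ _ h.1, hc _ _ _ h.2⟩
    · right; right; right; exact ⟨hc _ _ _ h.1, hc _ _ _ h.2⟩
  calc S.ncard ≤ _ := Set.ncard_le_ncard hsub (Finset.finite_toSet _)
    _ = _ := Set.ncard_coe_finset _
    _ ≤ 4 := Finset.card_le_four
end

section
/- Let k be an odd positive integer, i a positive integer with gcd(i,k) = 1, t a natural number with 0 ≤ t ≤ k−1, e = (2^i + 1)·2^t, F = GaloisField 2 k, and α ∈ F with α ≠ 0 and α ≠ 1. Define V : F × F → F × F by V(x,y) = ((αx + y)^e + x^e, (x + αy)^e + y^e), with components V₁, V₂. Then for all a, b, c, d ∈ F with (c,d) ≠ (0,0), the Walsh transform value W((a,b),(c,d)) = Σ_{x,y ∈ F} χ(Tr(c·V₁(x,y) + d·V₂(x,y) + a·x + b·y)) lies in the set {0, 2^k, −2^k, 2^(k+1), −2^(k+1)} of integers.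 -/
noncomputable instance (k : ℕ) : Fintype (GaloisField 2 k) := Fintype.ofFinite _

/-- The absolute trace `Tr(x) = x + x^2 + ⋯ + x^(2^(k-1))` of `GaloisField 2 k`,
computed inside the field (its values lie in the prime subfield `{0, 1}`). -/
noncomputable def absTrace (k : ℕ) (x : GaloisField 2 k) : GaloisField 2 k :=
  ∑ j ∈ Finset.range k, x ^ 2 ^ j

/-- The Walsh transform `W((a,b),(c,d)) = Σ_{x,y} χ(Tr(c·V₁(x,y) + d·V₂(x,y) + ax + by))`
of the closed butterfly `V(x,y) = ((αx+y)^e + x^e, (x+αy)^e + y^e)`, where `χ(0) = 1`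
and `χ(1) = -1`. -/
noncomputable def butterflyWalsh (k e : ℕ) (α a b c d : GaloisField 2 k) : ℤ :=
  haveI := Classical.decEq (GaloisField 2 k)
  ∑ x : GaloisField 2 k, ∑ y : GaloisField 2 k,
    if absTrace k (c * ((α * x + y) ^ e + x ^ e) + d * ((x + α * y) ^ e + y ^ e)
        + a * x + b * y) = 0 then 1 else -1

set_option linter.unusedSimpArgs false
set_option linter.unusedVariables false
section
variable {F : Type*} [Field F] [CharP F 2]

theorem bf_key (σ : F →+* F) (hfix : ∀ x, σ (σ x) = x → x = 0 ∨ x = 1)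
    (α a a2 w v : F) (ha : σ α = a) (ha2 : σ a = a2) (hv : σ w = v) (hw0 : w ≠ 0)
    (hα0 : α ≠ 0) (hα1 : α ≠ 1)
    (hdet : (w^2*(α*a+1)+1)*(w^2+α*a+1) = (w^2*α+a)*(w^2*a+α))
    (hn : w^2*(α*a+1)+1 ≠ 0)
    (hpar : (w^2*(α*a+1)+1)*(v^2*a2+a) = (w^2*α+a)*(v^2*(a*a2+1)+1)) : False := by
  have two : (2:F) = 0 := CharTwo.two_eq_zero
  have n4 : (4:F) = 0 := by linear_combination 2*two
  have n6 : (6:F) = 0 := by linear_combination 3*two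
  have n8 : (8:F) = 0 := by linear_combination 4*two
  have hfix1 : ∀ x, σ x = x → x = 0 ∨ x = 1 := fun x hx => hfix x (by rw [hx, hx])
  have inj : ∀ x, σ x = 0 → x = 0 := fun x hx => (map_eq_zero σ).1 hx
  have h1 : w^2+w+1 = w*(α+1)*(a+1) := by
    have : (w^2+w+1 + w*(α+1)*(a+1))^2 = 0 := by
      linear_combination (norm := (ring_nf; simp only [two, n4, n6, n8, mul_zero, add_zero, neg_zero, sub_zero])) hdet
    have := pow_eq_zero_iff (two_ne_zero) |>.1 this
    linear_combination (norm := (ring_nf; simp only [two, n4, n6, n8, mul_zero, add_zero, neg_zero, sub_zero])) this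
  have h2 : v^2+v+1 = v*(a+1)*(a2+1) := by
    have := congrArg σ h1
    simpa [ha, ha2, hv] using this
  have hn' : v^2*(a*a2+1)+1 ≠ 0 := by
    intro h
    apply hn; apply inj
    simpa [ha, ha2, hv] using h
  have hb : a + 1 ≠ 0 := by
    intro h
    have : α + 1 = 0 := inj _ (by simpa [ha] using h)
    exact hα1 (by linear_combination this - two)
  have ha0 : a ≠ 0 := by
    intro h; exact hα0 (inj _ (ha.trans h))
  have hv0 : v ≠ 0 := by
    intro h; exact hw0 (inj _ (hv.trans h))
  have ha20 : a2 ≠ 0 := by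
    intro h; exact ha0 (inj _ (ha2.trans h))
  obtain ⟨b, rfl⟩ : ∃ b, a = b + 1 := ⟨a+1, by linear_combination -two⟩
  have hb0 : b ≠ 0 := by
    intro h; apply hb; rw [h]; linear_combination two
  obtain ⟨β, rfl⟩ : ∃ b, α = b + 1 := ⟨α+1, by linear_combination -two⟩
  obtain ⟨b2, rfl⟩ : ∃ b, a2 = b + 1 := ⟨a2+1, by linear_combination -two⟩
  have hβ : σ β = b := by simpa using ha
  have hbb : σ b = b2 := by simpa using ha2
  have h1' : w^2+w+1 = w*β*b := by
    linear_combination (norm := (ring_nf; simp only [two, n4, n6, n8, mul_zero, add_zero, neg_zero, sub_zero])) h1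
  have h2' : v^2+v+1 = v*b*b2 := by
    linear_combination (norm := (ring_nf; simp only [two, n4, n6, n8, mul_zero, add_zero, neg_zero, sub_zero])) h2
  have e11 : (w^2*((β+1)*(b+1)+1)+1)*b = (b+w)*(w^2*b+(w^2+w+1)) := by
    linear_combination (norm := (ring_nf; simp only [two, n4, n6, n8, mul_zero, add_zero, neg_zero, sub_zero])) (-w*b-w)*h1'
  have e12 : (w^2*(β+1)+(b+1))*b = (b+w)*(b+(w^2+w+1)) := by
    linear_combination (norm := (ring_nf; simp only [two, n4, n6, n8, mul_zero, add_zero, neg_zero, sub_zero])) (-w)*h1'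
  have f11 : (v^2*((b+1)*(b2+1)+1)+1)*b = (b+v)*(v^2*b+(v^2+v+1)) := by
    linear_combination (norm := (ring_nf; simp only [two, n4, n6, n8, mul_zero, add_zero, neg_zero, sub_zero])) (-v*b-v)*h2'
  have f12 : (v^2*(b2+1)+(b+1))*b = (b+v)*(b+(v^2+v+1)) := by
    linear_combination (norm := (ring_nf; simp only [two, n4, n6, n8, mul_zero, add_zero, neg_zero, sub_zero])) (-v)*h2'
  have hbw : b + w ≠ 0 := by
    intro h; rw [h, zero_mul] at e11
    exact (mul_ne_zero hn hb0) e11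
  have hbv : b + v ≠ 0 := by
    intro h; rw [h, zero_mul] at f11
    exact (mul_ne_zero hn' hb0) f11
  have hc : (w^2*b+(w^2+w+1))*(b+(v^2+v+1)) = (b+(w^2+w+1))*(v^2*b+(v^2+v+1)) := by
    apply mul_left_cancel₀ (mul_ne_zero hbw hbv)
    linear_combination b^2*hpar - e11*(v^2*(b2+1)+(b+1))*b - ((b+w)*(w^2*b+(w^2+w+1)))*f12
      + e12*(v^2*((b+1)*(b2+1)+1)+1)*b + ((b+w)*(b+(w^2+w+1)))*f11
  have hc2 : b*((w+v)*(b*(w+v)+(1+w*v))) = 0 := by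
    linear_combination (norm := (ring_nf; simp only [two, n4, n6, n8, mul_zero, add_zero, neg_zero, sub_zero])) hc
  have hwv : w + v ≠ 0 := by
    intro h
    have hvw : v = w := by linear_combination h - w*two
    rcases hfix1 w (hv.trans hvw) with h | h
    · exact hw0 h
    · have e1 : β * b = 1 := by
        rw [h] at h1'; linear_combination -h1' + two
      have e2 : b * b2 = 1 := by
        rw [hvw, h] at h2'; linear_combination -h2' + two
      have : b2 = β := by
        apply mul_left_cancel₀ hb0; linear_combination e2 - e1
      rcases hfix β (by rw [hβ, hbb, this]) with h | h
      · exact hα1 (by rw [h, zero_add])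
      · exact hα0 (by rw [h]; linear_combination two)
  have hb1 : b*(w+v) = 1+w*v := by
    have := (mul_eq_zero.1 ((mul_eq_zero.1 hc2).resolve_left hb0)).resolve_left hwv
    linear_combination this - (1+w*v)*two
  obtain ⟨y, hy⟩ : ∃ y, σ v = y := ⟨_, rfl⟩
  have hb2 : b2*(v+y) = 1+v*y := by
    have := congrArg σ hb1
    simpa [hbb, hv, hy] using this
  have hw1 : 1 + w ≠ 0 := by
    intro h
    have : w = 1 := by linear_combination h - two
    apply hwv; rw [← hv, this, map_one]; linear_combination two
  have hv1 : 1 + v ≠ 0 := by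
    intro h; exact hw1 (inj _ (by simpa [hv] using h))
  have hy1 : 1 + y ≠ 0 := by
    intro h; exact hv1 (inj _ (by simpa [hy] using h))
  obtain ⟨r, hr⟩ : ∃ r, r = (1+w)⁻¹ := ⟨_, rfl⟩
  obtain ⟨R, hR⟩ : ∃ r, r = (1+v)⁻¹ := ⟨_, rfl⟩
  obtain ⟨Y, hY⟩ : ∃ r, r = (1+y)⁻¹ := ⟨_, rfl⟩
  have sr : σ r = R := by rw [hr, hR]; simp [hv]
  have sR : σ R = Y := by rw [hR, hY]; simp [hy]
  have ir : r * (1+w) = 1 := by rw [hr]; field_simp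
  have iR : R * (1+v) = 1 := by rw [hR]; field_simp
  have iY : Y * (1+y) = 1 := by rw [hY]; field_simp
  have r0 : r ≠ 0 := left_ne_zero_of_mul_eq_one ir
  have R0 : R ≠ 0 := left_ne_zero_of_mul_eq_one iR
  have Y0 : Y ≠ 0 := left_ne_zero_of_mul_eq_one iY
  have jr : r * w = 1 + r := by linear_combination ir - r*two
  have jR : R * v = 1 + R := by linear_combination iR - R*two
  have jY : Y * y = 1 + Y := by linear_combination iY - Y*two
  have k1 : b * (r + R) = 1 + r + R := by
    have : r*R*(b*(w+v)) = r*R*(1+w*v) := by rw [hb1]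
    linear_combination (norm := (ring_nf; simp only [two, n4, n6, n8, mul_zero, add_zero, neg_zero, sub_zero])) this - (b*R)*jr - (b*r)*jR + R*v*jr + (1+r)*jR
  have k2 : b2 * (R + Y) = 1 + R + Y := by
    have : R*Y*(b2*(v+y)) = R*Y*(1+v*y) := by rw [hb2]
    linear_combination (norm := (ring_nf; simp only [two, n4, n6, n8, mul_zero, add_zero, neg_zero, sub_zero])) this - (b2*Y)*jR - (b2*R)*jY + Y*y*jR + (1+R)*jY
  have k3 : R^2 + R + 1 = (R^2+R)*b*b2 := by
    have : R^2*(v^2+v+1) = R^2*(v*b*b2) := by rw [h2']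
    linear_combination (norm := (ring_nf; simp only [two, n4, n6, n8, mul_zero, add_zero, neg_zero, sub_zero])) this - (R*v + 1 + R)*jR - R*jR + R*b*b2*jR
  have k4 : R^2*(r+Y) = R + r*Y := by
    have : (R^2+R+1)*((r+R)*(R+Y)) = (R^2+R)*((1+r+R)*(1+R+Y)) := by
      rw [k3, ← k1, ← k2]; ring
    linear_combination (norm := (ring_nf; simp only [two, n4, n6, n8, mul_zero, add_zero, neg_zero, sub_zero])) this
  have k5 : ((r*R)^2+r*R)*((R+Y)^2+(R+Y)) = ((R*Y)^2+R*Y)*((r+R)^2+(r+R)) := by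
    linear_combination (norm := (ring_nf; simp only [two, n4, n6, n8, mul_zero, add_zero, neg_zero, sub_zero])) (r+Y)*R*(1+R)*k4
  have hq1 : ∀ z : F, z ≠ 0 → z * σ z = 1 → z = 1 := by
    intro z hz h
    have h' : σ z * σ (σ z) = 1 := by simpa using congrArg σ h
    have : σ (σ z) = z := by
      apply mul_left_cancel₀ (right_ne_zero_of_mul_eq_one h)
      linear_combination h' - h
    exact (hfix z this).resolve_left hz
  have hne : ∀ z : F, z + 1 ≠ 0 → z ≠ 1 := by
    intro z h h'; apply h; rw [h']; linear_combination two
  have r1 : r ≠ 1 := by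
    intro h; rw [h] at jr; apply hw0; linear_combination jr + two
  have hP : r + R ≠ 0 := by
    intro h
    rcases hfix1 r (by rw [sr]; linear_combination h - r*two) with h | h
    · exact r0 h
    · exact r1 h
  have hP1 : r + R + 1 ≠ 0 := by
    intro h
    have : b * (r + R) = 0 := by rw [k1]; linear_combination h
    exact (mul_ne_zero hb0 hP) this
  have hd : (r+R)^2+(r+R) ≠ 0 := by
    have : (r+R)^2+(r+R) = (r+R)*(r+R+1) := by ring
    rw [this]; exact mul_ne_zero hP hP1
  have hd' : (R+Y)^2+(R+Y) ≠ 0 := by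
    intro h; exact hd (inj _ (by simpa [sr, sR] using h))
  have hI : σ (((r*R)^2+r*R)/((r+R)^2+(r+R))) = ((r*R)^2+r*R)/((r+R)^2+(r+R)) := by
    simp only [map_div₀, map_add, map_mul, map_pow, sr, sR]
    rw [div_eq_div_iff hd' hd, k5]
  rcases hfix1 _ hI with h | h
  · rw [div_eq_zero_iff] at h
    have h := h.resolve_right hd
    have h3 : (r*R)*(r*R+1) = 0 := by linear_combination h
    rcases mul_eq_zero.1 h3 with h | h
    · exact mul_ne_zero r0 R0 h
    · exact r1 (hq1 r r0 (by rw [sr]; linear_combination h - two))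
  · rw [div_eq_one_iff_eq hd] at h
    have h3 : ((r+1)*(R+1))*((r+1)*(R+1)+1) = 0 := by
      linear_combination (norm := (ring_nf; simp only [two, n4, n6, n8, mul_zero, add_zero, neg_zero, sub_zero])) h
    have hr1 : r + 1 ≠ 0 := by
      intro h; apply r1; linear_combination h - two
    have hR1 : R + 1 ≠ 0 := by
      intro h; exact hr1 (inj _ (by simpa [sr] using h))
    rcases mul_eq_zero.1 h3 with h | h
    · exact mul_ne_zero hr1 hR1 h
    · have := hq1 (r+1) hr1 (by simp only [map_add, map_one, sr]; linear_combination h - two)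
      exact r0 (by linear_combination this)
end

/-- The radical equations. -/
def BfRad {F : Type*} [Field F] (σ : F →+* F) (n11 n12 n21 n22 : F) (z : F × F) : Prop :=
  σ n11 * σ (σ z.1) + σ n12 * σ (σ z.2) = n11 * z.1 + n21 * z.2 ∧
  σ n21 * σ (σ z.1) + σ n22 * σ (σ z.2) = n12 * z.1 + n22 * z.2

theorem bfRad_add {F : Type*} [Field F] (σ : F →+* F) (n11 n12 n21 n22 : F) (z z' : F × F)
    (h : BfRad σ n11 n12 n21 n22 z) (h' : BfRad σ n11 n12 n21 n22 z') :
    BfRad σ n11 n12 n21 n22 (z + z') := by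
  obtain ⟨h1, h2⟩ := h
  obtain ⟨h1', h2'⟩ := h'
  constructor
  · simp only [Prod.fst_add, Prod.snd_add, map_add]
    linear_combination h1 + h1'
  · simp only [Prod.fst_add, Prod.snd_add, map_add]
    linear_combination h2 + h2'

theorem bf_radA {F : Type*} [Field F] [CharP F 2] (σ : F →+* F)
    (hfix : ∀ x, σ (σ x) = x → x = 0 ∨ x = 1)
    (n11 n12 n21 n22 : F) (hδ : n11 * n22 - n12 * n21 ≠ 0) :
    ∃ z1 z2, ∀ z, BfRad σ n11 n12 n21 n22 z → z = 0 ∨ z = z1 ∨ z = z2 ∨ z = z1 + z2 := by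
  have two : (2:F) = 0 := CharTwo.two_eq_zero
  have hdet : ∀ z z' : F × F, BfRad σ n11 n12 n21 n22 z → BfRad σ n11 n12 n21 n22 z' →
      σ (n11 * n22 - n12 * n21) * σ (σ (z.1 * z'.2 - z'.1 * z.2)) =
        (n11 * n22 - n12 * n21) * (z.1 * z'.2 - z'.1 * z.2) := by
    rintro ⟨x, y⟩ ⟨x', y'⟩ ⟨h1, h2⟩ ⟨h1', h2'⟩
    simp only at h1 h2 h1' h2'
    simp only [map_sub, map_mul]
    linear_combination h1 * (σ n21 * σ (σ x') + σ n22 * σ (σ y')) + (n11 * x + n21 * y) * h2'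
      - h1' * (σ n21 * σ (σ x) + σ n22 * σ (σ y)) - (n11 * x' + n21 * y') * h2
  have hprop : ∀ z1 : F × F, z1 ≠ 0 → BfRad σ n11 n12 n21 n22 z1 → ∀ z,
      BfRad σ n11 n12 n21 n22 z → z1.1 * z.2 - z.1 * z1.2 = 0 → z = 0 ∨ z = z1 := by
    rintro ⟨x1, y1⟩ h0 ⟨h1, h2⟩ ⟨x, y⟩ ⟨h1', h2'⟩ hw
    simp only at h1 h2 h1' h2' hw
    obtain ⟨μ, hx, hy⟩ : ∃ μ, x = μ * x1 ∧ y = μ * y1 := by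
      by_cases hx : x1 = 0
      · have hy : y1 ≠ 0 := by
          rintro rfl; exact h0 (by rw [hx]; rfl)
        refine ⟨y / y1, ?_, by field_simp⟩
        rw [hx] at hw ⊢
        have : x * y1 = 0 := by linear_combination -hw
        rw [mul_zero]; exact (mul_eq_zero.1 this).resolve_right hy
      · refine ⟨x / x1, by field_simp, ?_⟩
        field_simp
        linear_combination hw
    subst hx hy
    simp only [map_mul] at h1' h2'
    have e1 : (σ (σ μ) - μ) * (n11 * x1 + n21 * y1) = 0 := by
      linear_combination h1' - σ (σ μ) * h1
    have e2 : (σ (σ μ) - μ) * (n12 * x1 + n22 * y1) = 0 := by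
      linear_combination h2' - σ (σ μ) * h2
    have e3 : σ (σ μ) = μ := by
      by_contra hne
      have hne : σ (σ μ) - μ ≠ 0 := sub_ne_zero.2 hne
      have e1 := (mul_eq_zero.1 e1).resolve_left hne
      have e2 := (mul_eq_zero.1 e2).resolve_left hne
      apply h0
      have hx : (n11 * n22 - n12 * n21) * x1 = 0 := by
        linear_combination n22 * e1 - n21 * e2
      have hy : (n11 * n22 - n12 * n21) * y1 = 0 := by
        linear_combination n11 * e2 - n12 * e1
      rw [(mul_eq_zero.1 hx).resolve_left hδ, (mul_eq_zero.1 hy).resolve_left hδ]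
      rfl
    rcases hfix μ e3 with h | h
    · left; simp [h]
    · right; simp [h]
  by_cases H1 : ∃ z1, z1 ≠ 0 ∧ BfRad σ n11 n12 n21 n22 z1
  swap
  · push Not at H1
    refine ⟨0, 0, fun z hz => Or.inl ?_⟩
    by_contra h
    exact H1 z h hz
  obtain ⟨z1, hz1, hr1⟩ := H1
  by_cases H2 : ∃ z2, BfRad σ n11 n12 n21 n22 z2 ∧ z1.1 * z2.2 - z2.1 * z1.2 ≠ 0
  swap
  · push Not at H2
    refine ⟨z1, 0, fun z hz => ?_⟩
    rcases hprop z1 hz1 hr1 z hz (H2 z hz) with h | h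
    · exact Or.inl h
    · exact Or.inr (Or.inl h)
  obtain ⟨z2, hr2, hw2⟩ := H2
  refine ⟨z1, z2, fun z hz => ?_⟩
  have d1 := hdet z1 z hr1 hz
  have d2 := hdet z1 z2 hr1 hr2
  have hfx : σ (σ ((z1.1 * z.2 - z.1 * z1.2) / (z1.1 * z2.2 - z2.1 * z1.2))) =
      (z1.1 * z.2 - z.1 * z1.2) / (z1.1 * z2.2 - z2.1 * z1.2) := by
    have hδ' : σ (n11 * n22 - n12 * n21) ≠ 0 := (map_ne_zero σ).2 hδ
    have hw2' : σ (σ (z1.1 * z2.2 - z2.1 * z1.2)) ≠ 0 := (map_ne_zero σ).2 ((map_ne_zero σ).2 hw2)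
    rw [map_div₀, map_div₀, div_eq_div_iff hw2' hw2]
    apply mul_left_cancel₀ (mul_ne_zero hδ' hδ)
    generalize σ (σ (z1.1 * z2.2 - z2.1 * z1.2)) = A at *
    generalize σ (σ (z1.1 * z.2 - z.1 * z1.2)) = B at *
    generalize σ (n11 * n22 - n12 * n21) = C at *
    generalize (n11 * n22 - n12 * n21) = D at *
    linear_combination (z1.1 * z2.2 - z2.1 * z1.2) * D * d1 - (z1.1 * z.2 - z.1 * z1.2) * D * d2
  rcases hfix _ hfx with h | h
  · rw [div_eq_zero_iff] at h
    rcases hprop z1 hz1 hr1 z hz (h.resolve_right hw2) with h | h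
    · exact Or.inl h
    · exact Or.inr (Or.inl h)
  · rw [div_eq_one_iff_eq hw2] at h
    have := hprop z1 hz1 hr1 (z + z2) (bfRad_add σ _ _ _ _ _ _ hz hr2) (by
      simp only [Prod.fst_add, Prod.snd_add]
      linear_combination h + (z1.1 * z2.2 - z2.1 * z1.2) * two)
    have hz2 : z2 + z2 = 0 := by
      ext
      · exact CharTwo.add_self_eq_zero _
      · exact CharTwo.add_self_eq_zero _
    have hzz : z = (z + z2) + z2 := by rw [add_assoc, hz2, add_zero]
    rcases this with h | h
    · rw [h, zero_add] at hzz
      exact Or.inr (Or.inr (Or.inl hzz))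
    · rw [h] at hzz
      exact Or.inr (Or.inr (Or.inr hzz))

theorem bf_radB {F : Type*} [Field F] [CharP F 2] (σ : F →+* F)
    (hfix : ∀ x, σ (σ x) = x → x = 0 ∨ x = 1) (hsq : ∀ u : F, ∃ w, u = w^2)
    (α a c d : F) (ha : σ α = a) (hα0 : α ≠ 0) (hα1 : α ≠ 1) (hcd : ¬ (c = 0 ∧ d = 0))
    (hδ : (c*(α*a+1)+d) * (c + d*(α*a+1)) - (c*α+d*a) * (c*a+d*α) = 0) (z : F × F)
    (hz : BfRad σ (c*(α*a+1)+d) (c*α+d*a) (c*a+d*α) (c + d*(α*a+1)) z) : z = 0 := by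
  have two : (2:F) = 0 := CharTwo.two_eq_zero
  have inj : ∀ x, σ x = 0 → x = 0 := fun x hx => (map_eq_zero σ).1 hx
  have ha0 : a ≠ 0 := by
    intro h; exact hα0 (inj _ (ha.trans h))
  have hd0 : d ≠ 0 := by
    rintro rfl
    apply hcd
    refine ⟨?_, rfl⟩
    have : c^2 = 0 := by linear_combination hδ
    exact pow_eq_zero_iff (two_ne_zero) |>.1 this
  have hc0 : c ≠ 0 := by
    rintro rfl
    have : d^2 = 0 := by linear_combination hδ
    exact hd0 (pow_eq_zero_iff (two_ne_zero) |>.1 this)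
  have hpar : c*(α*a+1)+d ≠ 0 →
      (c*(α*a+1)+d) * σ (c*a+d*α) - (c*α+d*a) * σ (c*(α*a+1)+d) ≠ 0 := by
    intro hn hp
    obtain ⟨w, hw⟩ := hsq (c / d)
    have hc : c = w^2*d := by rw [← hw]; field_simp
    have hw0 : w ≠ 0 := by
      rintro rfl; apply hc0; rw [hc]; ring
    have hσd : σ d ≠ 0 := (map_ne_zero σ).2 hd0
    subst hc
    simp only [map_add, map_mul, map_pow, map_one, ha] at hp
    refine bf_key σ hfix α a (σ a) w (σ w) ha rfl rfl hw0 hα0 hα1 ?_ ?_ ?_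
    · apply mul_left_cancel₀ (mul_ne_zero hd0 hd0)
      linear_combination hδ
    · intro h; apply hn; linear_combination d * h
    · apply mul_left_cancel₀ (mul_ne_zero hd0 hσd)
      linear_combination hp
  have hno : ¬ (c*(α*a+1)+d = 0 ∧ c*α+d*a = 0 ∧ c*a+d*α = 0) := by
    rintro ⟨h1, h2, h3⟩
    have : (c + d)^2 * α = 0 := by
      linear_combination c * h2 + d * h3 + (c * d * α - c * d * a) * two
    have h4 := pow_eq_zero_iff (two_ne_zero) |>.1 ((mul_eq_zero.1 this).resolve_right hα0)
    have : c * (α * a) = 0 := by linear_combination h1 - h4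
    exact mul_ne_zero hc0 (mul_ne_zero hα0 ha0) this
  generalize c*(α*a+1)+d = n11 at *
  generalize c*α+d*a = n12 at *
  generalize c*a+d*α = n21 at *
  generalize c + d*(α*a+1) = n22 at *
  obtain ⟨x, y⟩ := z
  obtain ⟨h1, h2⟩ := hz
  simp only at h1 h2
  have fin : x = 0 → y = 0 → ((x, y) : F × F) = 0 := by
    rintro rfl rfl; rfl
  by_cases hn : n11 = 0
  · subst hn
    have hm : n12 * n21 = 0 := by linear_combination -hδ
    rcases mul_eq_zero.1 hm with h | h
    · subst h
      have h21 : n21 ≠ 0 := fun h => hno ⟨rfl, rfl, h⟩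
      have hy : y = 0 := by
        apply (mul_eq_zero.1 (?_ : n21 * y = 0)).resolve_left h21
        simp only [map_zero] at h1
        linear_combination -h1
      subst hy
      refine fin ?_ rfl
      apply inj; apply inj
      apply (mul_eq_zero.1 (?_ : σ n21 * _ = 0)).resolve_left ((map_ne_zero σ).2 h21)
      simpa using h2
    · subst h
      have h12 : n12 ≠ 0 := fun h => hno ⟨rfl, h, rfl⟩
      have hy : y = 0 := by
        apply inj; apply inj
        apply (mul_eq_zero.1 (?_ : σ n12 * _ = 0)).resolve_left ((map_ne_zero σ).2 h12)
        simpa using h1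
      subst hy
      refine fin ?_ rfl
      apply (mul_eq_zero.1 (?_ : n12 * x = 0)).resolve_left h12
      simp only [map_zero] at h2
      linear_combination -h2
  · have hp := hpar hn
    have hδ' : σ n11 * σ n22 - σ n12 * σ n21 = 0 := by
      simpa using congrArg σ hδ
    have l1 : n11 * x + n21 * y = 0 := by
      apply (mul_eq_zero.1 (?_ : (n11 * σ n21 - n12 * σ n11) * _ = 0)).resolve_left hp
      linear_combination n11 * σ n11 * h2 - n11 * σ n21 * h1 - n11 * σ (σ y) * hδ' + σ n11 * y * hδ
    have l2 : n11 * σ x + n12 * σ y = 0 := by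
      apply inj
      simp only [map_add, map_mul]
      rw [h1, l1]
    have l3 : σ n11 * σ x + σ n21 * σ y = 0 := by
      simpa using congrArg σ l1
    have hy : y = 0 := by
      apply inj
      apply (mul_eq_zero.1 (?_ : (n11 * σ n21 - n12 * σ n11) * _ = 0)).resolve_left hp
      linear_combination n11 * l3 - σ n11 * l2
    refine fin ?_ hy
    rw [hy] at l1
    apply (mul_eq_zero.1 (?_ : n11 * x = 0)).resolve_left hn
    linear_combination l1

theorem bf_rad {F : Type*} [Field F] [CharP F 2] (σ : F →+* F)
    (hfix : ∀ x, σ (σ x) = x → x = 0 ∨ x = 1) (hsq : ∀ u : F, ∃ w, u = w^2)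
    (α a c d : F) (ha : σ α = a) (hα0 : α ≠ 0) (hα1 : α ≠ 1) (hcd : ¬ (c = 0 ∧ d = 0)) :
    ∃ z1 z2, ∀ z, BfRad σ (c*(α*a+1)+d) (c*α+d*a) (c*a+d*α) (c + d*(α*a+1)) z →
      z = 0 ∨ z = z1 ∨ z = z2 ∨ z = z1 + z2 := by
  by_cases hδ : (c*(α*a+1)+d) * (c + d*(α*a+1)) - (c*α+d*a) * (c*a+d*α) = 0
  · exact ⟨0, 0, fun z hz =>
      Or.inl (bf_radB σ hfix hsq α a c d ha hα0 hα1 hcd hδ z hz)⟩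
  · exact bf_radA σ hfix _ _ _ _ hδ

/-- Squared character sum of a quadratic function. -/
theorem bf_sumsq {G : Type*} [AddCommGroup G] [Fintype G] [DecidableEq G]
    (g : G → ℤ) (hg : ∀ z, g z = 1 ∨ g z = -1) (χ : G → G → ℤ)
    (hχ : ∀ h z, χ h z = 1 ∨ χ h z = -1)
    (hadd : ∀ h z z', χ h (z + z') = χ h z * χ h z')
    (hq : ∀ z h, g (z + h) = g z * g h * χ h z) (m : ℕ) (hcard : Fintype.card G = m ^ 2)
    (hm : 0 < m)
    (S : Finset G) (hS : ∀ h, (∀ z, χ h z = 1) → h ∈ S) (hS4 : S.card ≤ 4) :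
    (∑ z, g z) ∈ ({0, (m : ℤ), -(m : ℤ), 2 * (m : ℤ), -(2 * (m : ℤ))} : Set ℤ) := by
  classical
  have key : (∑ z, g z) ^ 2 =
      (m : ℤ) ^ 2 * ∑ h ∈ S.filter (fun h => ∀ z, χ h z = 1), g h := by
    have e1 : (∑ z, g z) ^ 2 = ∑ h, g h * ∑ z, χ h z := by
      calc (∑ z, g z) ^ 2 = ∑ z, ∑ z', g z * g z' := by
            rw [sq, Finset.sum_mul_sum]
        _ = ∑ z, ∑ h, g z * g (z + h) := by
            refine Finset.sum_congr rfl fun z _ => ?_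
            exact (Equiv.sum_comp (Equiv.addLeft z) (fun z' => g z * g z')).symm
        _ = ∑ z, ∑ h, g h * χ h z := by
            refine Finset.sum_congr rfl fun z _ => Finset.sum_congr rfl fun h _ => ?_
            rw [hq]
            rcases hg z with e | e <;> rw [e] <;> ring
        _ = ∑ h, g h * ∑ z, χ h z := by
            rw [Finset.sum_comm]
            exact Finset.sum_congr rfl fun h _ => (Finset.mul_sum _ _ _).symm
    have e2 : ∀ h, g h * ∑ z, χ h z = if (∀ z, χ h z = 1) then (m : ℤ) ^ 2 * g h else 0 := by
      intro h
      split_ifs with H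
      · simp only [H, Finset.sum_const, Finset.card_univ, hcard]
        push_cast; simp; ring
      · push Not at H
        obtain ⟨z0, hz0⟩ := H
        have hz0 := (hχ h z0).resolve_left hz0
        have : ∑ z, χ h z = ∑ z, χ h (z0 + z) :=
          (Equiv.sum_comp (Equiv.addLeft z0) (fun z => χ h z)).symm
        simp only [hadd, hz0] at this
        rw [← Finset.mul_sum] at this
        have : ∑ z, χ h z = 0 := by linarith
        rw [this, mul_zero]
    rw [e1, Finset.sum_congr rfl fun h _ => e2 h, Finset.mul_sum, ← Finset.sum_filter]
    refine Finset.sum_congr ?_ fun _ _ => rfl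
    ext h
    simp only [Finset.mem_filter, Finset.mem_univ, true_and]
    exact ⟨fun H => ⟨hS h H, H⟩, fun H => H.2⟩
  have hle : ∑ h ∈ S.filter (fun h => ∀ z, χ h z = 1), g h ≤ 4 := by
    calc ∑ h ∈ S.filter (fun h => ∀ z, χ h z = 1), g h
        ≤ ∑ h ∈ S.filter (fun h => ∀ z, χ h z = 1), 1 :=
          Finset.sum_le_sum fun h _ => by rcases hg h with e | e <;> rw [e] <;> norm_num
      _ = ((S.filter (fun h => ∀ z, χ h z = 1)).card : ℤ) := by simp
      _ ≤ 4 := by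
          exact_mod_cast (Finset.card_filter_le _ _).trans hS4
  generalize ∑ z, g z = W at *
  have hdvd : (m : ℤ) ∣ W := by
    rw [← Int.pow_dvd_pow_iff (two_ne_zero), key]
    exact dvd_mul_right _ _
  obtain ⟨n, rfl⟩ := hdvd
  have hm' : (m : ℤ) ^ 2 ≠ 0 := by positivity
  have hn : n ^ 2 ≤ 4 := by
    have : n ^ 2 = ∑ h ∈ S.filter (fun h => ∀ z, χ h z = 1), g h := by
      apply mul_left_cancel₀ hm'
      rw [← key]; ring
    rw [this]; exact hle
  have h1 : n ≤ 2 := by nlinarith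
  have h2 : -2 ≤ n := by nlinarith
  simp only [Set.mem_insert_iff, Set.mem_singleton_iff]
  interval_cases n
  · right; right; right; right; ring
  · right; right; left; ring
  · left; ring
  · right; left; ring
  · right; right; right; left; ring

section BfTrace

variable {k : ℕ}

theorem bf_absTrace_eq (hk : k ≠ 0) (x : GaloisField 2 k) :
    absTrace k x = algebraMap (ZMod 2) _ (Algebra.trace (ZMod 2) (GaloisField 2 k) x) := by
  rw [FiniteField.algebraMap_trace_eq_sum_pow, GaloisField.finrank 2 hk, Nat.card_zmod]
  rfl

theorem bf_absTrace_add (hk : k ≠ 0) (x y : GaloisField 2 k) :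
    absTrace k (x + y) = absTrace k x + absTrace k y := by
  simp only [bf_absTrace_eq hk, map_add]

theorem bf_absTrace_cases (hk : k ≠ 0) (x : GaloisField 2 k) :
    absTrace k x = 0 ∨ absTrace k x = 1 := by
  rw [bf_absTrace_eq hk]
  generalize Algebra.trace (ZMod 2) (GaloisField 2 k) x = t
  fin_cases t
  · left; exact map_zero _
  · right; exact map_one _

theorem bf_absTrace_sq (hk : k ≠ 0) (x : GaloisField 2 k) :
    absTrace k (x ^ 2) = absTrace k x := by
  have h : absTrace k (x ^ 2) = (absTrace k x) ^ 2 := by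
    unfold absTrace
    rw [sum_pow_char 2]
    refine Finset.sum_congr rfl fun j _ => ?_
    rw [← pow_mul, ← pow_mul, mul_comm]
  rw [h]
  rcases bf_absTrace_cases hk x with e | e <;> rw [e] <;> simp

theorem bf_absTrace_pow (hk : k ≠ 0) (x : GaloisField 2 k) (n : ℕ) :
    absTrace k (x ^ 2 ^ n) = absTrace k x := by
  induction n with
  | zero => simp
  | succ n ih => rw [pow_succ, pow_mul, bf_absTrace_sq hk, ih]

theorem bf_absTrace_nondeg (hk : k ≠ 0) (c : GaloisField 2 k)
    (h : ∀ x, absTrace k (c * x) = 0) : c = 0 := by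
  apply (traceForm_nondegenerate (ZMod 2) (GaloisField 2 k)).1 c
  intro x
  rw [Algebra.traceForm_apply]
  have := h x
  rw [bf_absTrace_eq hk] at this
  exact (map_eq_zero _).1 this

/-- The additive character. -/
noncomputable def bfPsi (k : ℕ) (x : GaloisField 2 k) : ℤ :=
  haveI := Classical.decEq (GaloisField 2 k)
  if absTrace k x = 0 then 1 else -1

theorem bfPsi_cases (x : GaloisField 2 k) : bfPsi k x = 1 ∨ bfPsi k x = -1 := by
  unfold bfPsi; split_ifs <;> simp

theorem bfPsi_eq_one (x : GaloisField 2 k) : bfPsi k x = 1 ↔ absTrace k x = 0 := by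
  unfold bfPsi; split_ifs with h <;> simp [h]

theorem bfPsi_congr {x y : GaloisField 2 k} (h : absTrace k x = absTrace k y) :
    bfPsi k x = bfPsi k y := by
  unfold bfPsi; rw [h]

theorem bfPsi_add (hk : k ≠ 0) (x y : GaloisField 2 k) :
    bfPsi k (x + y) = bfPsi k x * bfPsi k y := by
  unfold bfPsi
  rw [bf_absTrace_add hk]
  have h2 : (1 : GaloisField 2 k) + 1 = 0 := CharTwo.add_self_eq_zero _
  rcases bf_absTrace_cases hk x with e | e <;> rcases bf_absTrace_cases hk y with e' | e' <;>
    simp [e, e', h2]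

theorem bf_pow_surj (n : ℕ) (c : GaloisField 2 k) : ∃ c', c = c' ^ 2 ^ n := by
  have hinj : Function.Injective (iterateFrobenius (GaloisField 2 k) 2 n) :=
    (iterateFrobenius (GaloisField 2 k) 2 n).injective
  obtain ⟨c', h⟩ := (Finite.injective_iff_surjective.1 hinj) c
  exact ⟨c', by rw [← h, iterateFrobenius_def]⟩

theorem bf_fix (hk : Odd k) (i : ℕ) (hgcd : Nat.gcd i k = 1) (x : GaloisField 2 k)
    (h : iterateFrobenius (GaloisField 2 k) 2 i (iterateFrobenius (GaloisField 2 k) 2 i x) = x) :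
    x = 0 ∨ x = 1 := by
  have hk0 : k ≠ 0 := by rintro rfl; simp at hk
  have p1 : Function.IsPeriodicPt (frobenius (GaloisField 2 k) 2) (2 * i) x := by
    rw [Function.IsPeriodicPt, Function.IsFixedPt, iterate_frobenius]
    rw [iterateFrobenius_def, iterateFrobenius_def, ← pow_mul, ← pow_add] at h
    rw [two_mul]; exact h
  have p2 : Function.IsPeriodicPt (frobenius (GaloisField 2 k) 2) k x := by
    rw [Function.IsPeriodicPt, Function.IsFixedPt, iterate_frobenius]
    have := FiniteField.pow_card x
    rwa [← Nat.card_eq_fintype_card, GaloisField.card 2 k hk0] at this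
  have p3 := p1.gcd p2
  have hg : (2 * i).gcd k = 1 := by
    have h2 : Nat.Coprime 2 k := (Nat.coprime_two_left).2 hk
    exact Nat.Coprime.mul_left h2 hgcd
  rw [hg] at p3
  have p4 : x ^ 2 = x := by simpa [Function.IsPeriodicPt, Function.IsFixedPt, frobenius_def] using p3
  have : x * (x - 1) = 0 := by linear_combination p4
  rcases mul_eq_zero.1 this with h | h
  · exact Or.inl h
  · exact Or.inr (sub_eq_zero.1 h)

end BfTrace

/-- The quadratic function. -/
def bfQ {F : Type*} [Field F] (σ : F →+* F) (α a b c d : F) (z : F × F) : F :=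
  c * ((α * z.1 + z.2) * σ (α * z.1 + z.2) + z.1 * σ z.1)
    + d * ((z.1 + α * z.2) * σ (z.1 + α * z.2) + z.2 * σ z.2) + a * z.1 + b * z.2

/-- The associated form, first coefficient. -/
def bfL {F : Type*} [Field F] (σ : F →+* F) (n11 n12 m1 m2 : F) (h : F × F) : F :=
  σ n11 * σ (σ h.1) + σ n12 * σ (σ h.2) + m1 * h.1 + m2 * h.2

theorem bf_main (k i : ℕ) (hk : Odd k) (hgcd : Nat.gcd i k = 1)
    (α : GaloisField 2 k) (hα0 : α ≠ 0) (hα1 : α ≠ 1)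
    (a b c d : GaloisField 2 k) (hcd : ¬ (c = 0 ∧ d = 0)) :
    ∑ z : GaloisField 2 k × GaloisField 2 k,
      bfPsi k (bfQ (iterateFrobenius (GaloisField 2 k) 2 i) α a b c d z)
      ∈ ({0, ((2 ^ k : ℕ) : ℤ), -((2 ^ k : ℕ) : ℤ), 2 * ((2 ^ k : ℕ) : ℤ),
        -(2 * ((2 ^ k : ℕ) : ℤ))} : Set ℤ) := by
  classical
  have hk0 : k ≠ 0 := by rintro rfl; simp at hk
  have two : (2 : GaloisField 2 k) = 0 := CharTwo.two_eq_zero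
  have hsurj : Function.Surjective (iterateFrobenius (GaloisField 2 k) 2 i) :=
    Finite.injective_iff_surjective.1 (iterateFrobenius (GaloisField 2 k) 2 i).injective
  have htr : ∀ x, absTrace k (iterateFrobenius (GaloisField 2 k) 2 i x) = absTrace k x := by
    intro x; rw [iterateFrobenius_def, bf_absTrace_pow hk0]
  have hfix := bf_fix hk i hgcd
  generalize iterateFrobenius (GaloisField 2 k) 2 i = σ at *
  have hsq : ∀ u : GaloisField 2 k, ∃ w, u = w ^ 2 := by
    intro u; simpa using bf_pow_surj 1 u
  obtain ⟨z1, z2, hrad⟩ := bf_rad σ hfix hsq α (σ α) c d rfl hα0 hα1 hcd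
  obtain ⟨n11, e11⟩ : ∃ n, n = c*(α*σ α+1)+d := ⟨_, rfl⟩
  obtain ⟨n12, e12⟩ : ∃ n, n = c*α+d*σ α := ⟨_, rfl⟩
  obtain ⟨n21, e21⟩ : ∃ n, n = c*σ α+d*α := ⟨_, rfl⟩
  obtain ⟨n22, e22⟩ : ∃ n, n = c + d*(α*σ α+1) := ⟨_, rfl⟩
  rw [← e11, ← e12, ← e21, ← e22] at hrad
  refine bf_sumsq _ (fun z => bfPsi_cases _)
    (fun h z => bfPsi k (bfL σ n11 n12 n11 n21 h * σ z.1 + bfL σ n21 n22 n12 n22 h * σ z.2))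
    (fun h z => bfPsi_cases _) ?_ ?_ (2 ^ k) ?_ (by positivity) {0, z1, z2, z1 + z2} ?_ ?_
  · intro h z z'
    rw [← bfPsi_add hk0]
    congr 1
    simp only [Prod.fst_add, Prod.snd_add, map_add]
    ring
  · intro z h
    rw [← bfPsi_add hk0, ← bfPsi_add hk0]
    apply bfPsi_congr
    have e : bfQ σ α a b c d (z + h) = bfQ σ α a b c d z + bfQ σ α a b c d h +
        ((h.1 * (n11 * σ z.1 + n12 * σ z.2) + h.2 * (n21 * σ z.1 + n22 * σ z.2)) +
        (z.1 * (n11 * σ h.1 + n12 * σ h.2) + z.2 * (n21 * σ h.1 + n22 * σ h.2))) := by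
      rw [e11, e12, e21, e22]
      simp only [bfQ, Prod.fst_add, Prod.snd_add, map_add, map_mul]
      ring
    have e' : bfL σ n11 n12 n11 n21 h * σ z.1 + bfL σ n21 n22 n12 n22 h * σ z.2 =
        (h.1 * (n11 * σ z.1 + n12 * σ z.2) + h.2 * (n21 * σ z.1 + n22 * σ z.2)) +
        σ (z.1 * (n11 * σ h.1 + n12 * σ h.2) + z.2 * (n21 * σ h.1 + n22 * σ h.2)) := by
      simp only [bfL, map_add, map_mul]
      ring
    rw [e, e', bf_absTrace_add hk0, bf_absTrace_add hk0 (bfQ σ α a b c d z + bfQ σ α a b c d h),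
      bf_absTrace_add hk0 (h.1 * _ + _), bf_absTrace_add hk0 (h.1 * _ + _), htr]
  · rw [Fintype.card_prod, ← Nat.card_eq_fintype_card, GaloisField.card 2 k hk0, sq]
  · intro h H
    simp only [bfPsi_eq_one] at H
    have L1 : bfL σ n11 n12 n11 n21 h = 0 := by
      apply bf_absTrace_nondeg hk0
      intro x
      obtain ⟨x', rfl⟩ := hsurj x
      simpa using H (x', 0)
    have L2 : bfL σ n21 n22 n12 n22 h = 0 := by
      apply bf_absTrace_nondeg hk0
      intro x
      obtain ⟨x', rfl⟩ := hsurj x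
      simpa using H (0, x')
    have := hrad h (by
      unfold bfL at L1 L2
      constructor
      · linear_combination L1 - (n11 * h.1 + n21 * h.2) * two
      · linear_combination L2 - (n12 * h.1 + n22 * h.2) * two)
    simpa using this
  · exact Finset.card_le_four

/-- Part of Theorem 3.7: every Walsh transform value of the closed butterfly with
`k` odd, `gcd(i,k) = 1`, exponent `e = (2^i+1)·2^t` and coefficient `α ≠ 0, 1` lies in
`{0, ±2^k, ±2^(k+1)}`. -/
theorem closedButterfly_walsh_values (k i t : ℕ) (hk : Odd k) (hkpos : 0 < k)
    (hipos : 0 < i) (hgcd : Nat.gcd i k = 1) (ht : t ≤ k - 1)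
    (α : GaloisField 2 k) (hα0 : α ≠ 0) (hα1 : α ≠ 1)
    (a b c d : GaloisField 2 k) (hcd : (c, d) ≠ (0, 0)) :
    butterflyWalsh k ((2 ^ i + 1) * 2 ^ t) α a b c d
      ∈ ({0, 2 ^ k, -2 ^ k, 2 ^ (k + 1), -2 ^ (k + 1)} : Set ℤ) := by
  have hk0 : k ≠ 0 := hkpos.ne'
  obtain ⟨c', hc⟩ := bf_pow_surj t c
  obtain ⟨d', hd⟩ := bf_pow_surj t d
  have hcd' : ¬ (c' = 0 ∧ d' = 0) := by
    rintro ⟨rfl, rfl⟩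
    apply hcd
    rw [hc, hd]; simp
  have hW : butterflyWalsh k ((2 ^ i + 1) * 2 ^ t) α a b c d =
      ∑ z : GaloisField 2 k × GaloisField 2 k,
      bfPsi k (bfQ (iterateFrobenius (GaloisField 2 k) 2 i) α a b c' d' z) := by
    rw [Fintype.sum_prod_type]
    unfold butterflyWalsh
    refine Finset.sum_congr rfl fun x _ => Finset.sum_congr rfl fun y _ => ?_
    change bfPsi k _ = _
    apply bfPsi_congr
    have e : c * ((α * x + y) ^ ((2 ^ i + 1) * 2 ^ t) + x ^ ((2 ^ i + 1) * 2 ^ t)) +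
        d * ((x + α * y) ^ ((2 ^ i + 1) * 2 ^ t) + y ^ ((2 ^ i + 1) * 2 ^ t)) =
        (c' * ((α * x + y) ^ (2 ^ i + 1) + x ^ (2 ^ i + 1)) +
        d' * ((x + α * y) ^ (2 ^ i + 1) + y ^ (2 ^ i + 1))) ^ 2 ^ t := by
      rw [hc, hd]
      simp only [add_pow_char_pow, mul_pow, ← pow_mul]
    rw [e, add_assoc, bf_absTrace_add hk0, bf_absTrace_pow hk0, ← bf_absTrace_add hk0]
    congr 1
    simp only [bfQ, iterateFrobenius_def]
    ring
  have := bf_main k i hk hgcd α hα0 hα1 a b c' d' hcd'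
  rw [hW]
  generalize ∑ z : GaloisField 2 k × GaloisField 2 k,
      bfPsi k (bfQ (iterateFrobenius (GaloisField 2 k) 2 i) α a b c' d' z) = W at *
  simpa [pow_succ, mul_comm] using this
end
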